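/- Let 0 ≤ β < 4, α₀ > 0, and let a, b : ℝ⁴ → ℝ be continuous functions for which there exist constants a₀ > 0, b₀ > 0 with a(x) ≥ a₀ and b(x) ≥ b₀ for all x ∈ ℝ⁴. Let (uₙ) be a sequence of smooth functions on ℝ⁴ with finite E-norm ‖uₙ‖_E² = ∫_{ℝ⁴}(|Δuₙ|² + a(x)|∇uₙ|² + b(x)uₙ²) dx such that limsup_{n→∞} ‖uₙ‖_E² < (32π²/α₀)(1 − β/4). Then there exists q > 1 such that sup_n ∫_{ℝ⁴} ((e^{α₀ uₙ²} − 1)/|x|^β)^q dx < ∞, i.e., the sequence (e^{α₀ uₙ²} − 1)/|x|^β is bounded in L^q(ℝ⁴). -/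

import Mathlib

open MeasureTheory Real Filter Topology ENNReal

noncomputable section

/-- Four-dimensional Euclidean space with Lebesgue measure. -/
abbrev R4 : Type := EuclideanSpace ℝ (Fin 4)

/-- The Laplacian of `u : ℝ⁴ → ℝ`, as the sum of the pure second derivatives
along the coordinate directions. -/
noncomputable def lapl (u : R4 → ℝ) (x : R4) : ℝ :=
  ∑ i : Fin 4, iteratedFDeriv ℝ 2 u x ![EuclideanSpace.single i 1, EuclideanSpace.single i 1]

/-- The squared `E`-norm `∫ (|Δu|² + a|∇u|² + b u²) dx`, as an extended nonnegative real. -/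
noncomputable def enorm2 (a b : R4 → ℝ) (u : R4 → ℝ) : ℝ≥0∞ :=
  ∫⁻ x : R4, ENNReal.ofReal ((lapl u x) ^ 2 + a x * ‖gradient u x‖ ^ 2 + b x * (u x) ^ 2)

/-!
The function `|y|⁻²` is, up to the factor `-4π²`, the fundamental solution of the Laplacian on `ℝ⁴`.
Pairing `Δu` with a cut-off of it gives the local estimate `representation`,
`4π² |u(x)| ≤ ∫_{|y|<1} |y|⁻² |Δu(x+y)| dy + K ∫_{|y|<1} |u(x+y)| dy`,
whose last term is controlled by the `L²` norm of `u`.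

The potential is split at a radius `δ` (`newton_split`). Since `∫_{δ<|y|<1} |y|⁻⁴ = 2π² log (1/δ)`,
the far part is at most `(2π² log (1/δ) ‖Δu‖²)^{1/2}`, with the sharp constant. For `0 < s < 2` the
near part is at most `δ^s W(x)`, where `W` is the potential of `|Δu|` with the kernel
`|y|^{-(2+s)}`, which is integrable on the unit ball, so `W ∈ L²`. Choosing `δ^s W(x) ≈ 1` and `s`
close to `2` turns the subcritical condition `γ ‖Δu‖² < 32π²` into the pointwise bound
`exp (γ u²) ≤ K (1 + W²)` (`exp_bound`), an Adams inequality on `ℝ⁴` in the non-sharp range.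

The singular weight is removed on the unit ball by Young's inequality with an exponent `p` slightly
larger than `1 / (1 - β/4)`: `|x|^{-βqp/(p-1)}` is locally integrable and `γ = α₀qp` is still
subcritical for `q` close to `1`. Outside the unit ball `u²` is integrable where `|u| ≤ 1`, and
`1 + W² ≤ u² + W²` elsewhere (`weighted_bound`).

The `limsup` condition says nothing about finitely many terms of the sequence. For these the norm of
`Δu` need not be small, but the part of `Δu` above a large height `M` is small in `L²`, and the
remaining part contributes only a constant to the potential (`exp_bound_smooth`).
-/

/-! ### Radial integrals on `ℝ⁴` -/

lemma finrank_R4 : Module.finrank ℝ R4 = 4 := by simp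

lemma volume_real_unitBall : (volume : Measure R4).real (Metric.ball 0 1) = π ^ 2 / 2 := by
  have hG : Real.Gamma (((4 : ℕ) : ℝ) / 2 + 1) = 2 := by
    have : (((4 : ℕ) : ℝ) / 2 + 1) = ((2 : ℕ) : ℝ) + 1 := by norm_num
    rw [this, Real.Gamma_nat_eq_factorial]; norm_num
  have hs : √π ^ 4 = π ^ 2 := by
    rw [show (4 : ℕ) = 2 * 2 by norm_num, pow_mul, Real.sq_sqrt pi_pos.le]
  rw [Measure.real, EuclideanSpace.volume_ball]
  simp only [Fintype.card_fin, hG, hs]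
  rw [ENNReal.ofReal_one, one_pow, one_mul, ENNReal.toReal_ofReal (by positivity)]

/-- Integration in polar coordinates on `ℝ⁴`; the unit sphere has area `2π²`. -/
lemma integral_radial (f : ℝ → ℝ) :
    ∫ x : R4, f ‖x‖ = 2 * π ^ 2 * ∫ r in Set.Ioi (0 : ℝ), r ^ 3 * f r := by
  rw [integral_fun_norm_addHaar, volume_real_unitBall, finrank_R4]
  simp only [smul_eq_mul, nsmul_eq_mul]
  push_cast
  ring

lemma integrable_radial {f : ℝ → ℝ} :
    Integrable (fun x : R4 => f ‖x‖) ↔ IntegrableOn (fun r : ℝ => r ^ 3 * f r) (Set.Ioi 0) := by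
  rw [integrable_fun_norm_addHaar (volume : Measure R4), finrank_R4]
  rfl

lemma integral_kernel : ∫ x : R4, ((1 + ‖x‖ ^ 2) ^ 3)⁻¹ = π ^ 2 / 2 := by
  rw [integral_radial (fun r => ((1 + r ^ 2) ^ 3)⁻¹)]
  have hd : ∀ x ∈ Set.Ioi (0 : ℝ), HasDerivAt (fun r : ℝ => r ^ 4 / (4 * (1 + r ^ 2) ^ 2))
      (x ^ 3 * ((1 + x ^ 2) ^ 3)⁻¹) x := by
    intro x _
    have h1 : HasDerivAt (fun r : ℝ => r ^ 4) (4 * x ^ 3) x := by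
      simpa using hasDerivAt_pow 4 x
    have h2 : HasDerivAt (fun r : ℝ => 4 * (1 + r ^ 2) ^ 2) (4 * (2 * (1 + x ^ 2) * (2 * x))) x := by
      simpa using ((((hasDerivAt_pow 2 x).const_add 1).pow 2).const_mul 4)
    have hp : (1 + x ^ 2) ≠ 0 := by positivity
    refine (h1.div h2 (by positivity)).congr_deriv ?_
    field_simp
    ring
  have hlim : Tendsto (fun r : ℝ => r ^ 4 / (4 * (1 + r ^ 2) ^ 2)) atTop (𝓝 (1 / 4)) := by
    have h0 : Tendsto (fun r : ℝ => 1 / (4 * ((r ^ 2)⁻¹ + 1) ^ 2)) atTop (𝓝 (1 / (4 * (0 + 1) ^ 2))) := by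
      have h1 : Tendsto (fun r : ℝ => (r ^ 2)⁻¹) atTop (𝓝 0) :=
        tendsto_inv_atTop_zero.comp (tendsto_pow_atTop two_ne_zero)
      exact Tendsto.div tendsto_const_nhds (((h1.add_const 1).pow 2).const_mul 4) (by norm_num)
    norm_num at h0
    refine (h0.congr' ?_).trans (by norm_num)
    filter_upwards [eventually_gt_atTop 0] with r hr
    field_simp
  have hc : ContinuousWithinAt (fun r : ℝ => r ^ 4 / (4 * (1 + r ^ 2) ^ 2)) (Set.Ici 0) 0 := by
    apply Continuous.continuousWithinAt
    exact Continuous.div (by fun_prop) (by fun_prop) (fun x => by positivity)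
  rw [integral_Ioi_of_hasDerivAt_of_nonneg hc hd (fun x hx => ?_) hlim]
  · norm_num; ring
  · have : (0 : ℝ) < x := hx
    positivity

/-- `|x|^{-r}` is integrable on the unit ball of `ℝ⁴` for `r < 4`. -/
lemma lintegral_rpow_neg_lt_top {r : ℝ} (hr : r < 4) :
    ∫⁻ y in Metric.ball (0 : R4) 1, ENNReal.ofReal (‖y‖ ^ (-r)) < ⊤ := by
  have h : IntegrableOn (fun y : R4 => ‖y‖ ^ (-r)) (Metric.ball 0 1) := by
    rw [integrableOn_fun_norm_addHaar (volume : Measure R4) (f := fun t => t ^ (-r)), finrank_R4]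
    have h1 : IntegrableOn (fun t : ℝ => t ^ (3 - r)) (Set.Ioo 0 1) :=
      (intervalIntegral.integrableOn_Ioo_rpow_iff one_pos).2 (by linarith)
    refine h1.congr_fun (fun t ht => ?_) measurableSet_Ioo
    have : (0 : ℝ) < t := ht.1
    simp only [smul_eq_mul]
    rw [sub_eq_add_neg, Real.rpow_add this]
    norm_cast
  exact h.lintegral_lt_top

/-- `∫_{δ ≤ |y| < 1} |y|⁻⁴ dy = 2π² log (1/δ)`. -/
lemma lintegral_annulus {δ : ℝ} (h0 : 0 < δ) (h1 : δ ≤ 1) :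
    ∫⁻ y : R4, ENNReal.ofReal ((Set.Ico δ 1).indicator (fun t => (t ^ 4)⁻¹) ‖y‖)
      = ENNReal.ofReal (2 * π ^ 2 * -Real.log δ) := by
  set f : ℝ → ℝ := (Set.Ico δ 1).indicator (fun t => (t ^ 4)⁻¹) with hf
  have hfe : ∀ r : ℝ, r ^ 3 * f r = (Set.Ico δ 1).indicator (fun t => t⁻¹) r := by
    intro r
    by_cases hr : r ∈ Set.Ico δ 1
    · have : r ≠ 0 := (h0.trans_le hr.1).ne'
      simp only [hf, Set.indicator_of_mem hr]
      field_simp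
    · simp [hf, Set.indicator_of_notMem hr]
  have hInt : IntegrableOn (fun t : ℝ => t⁻¹) (Set.Ico δ 1) := by
    refine (ContinuousOn.integrableOn_Icc ?_).mono_set Set.Ico_subset_Icc_self
    exact continuousOn_inv₀.mono (fun t ht => (h0.trans_le ht.1).ne')
  have hi : Integrable (fun y : R4 => f ‖y‖) := by
    rw [integrable_radial]
    simp_rw [hfe]
    exact ((integrable_indicator_iff measurableSet_Ico).2 hInt).integrableOn
  rw [← ofReal_integral_eq_lintegral_ofReal hi, integral_radial]
  · congr 2
    simp_rw [hfe]
    rw [setIntegral_indicator measurableSet_Ico,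
      show Set.Ioi 0 ∩ Set.Ico δ 1 = Set.Ico δ 1 from
        Set.inter_eq_right.2 (fun t ht => h0.trans_le ht.1), integral_Ico_eq_integral_Ioc,
      ← intervalIntegral.integral_of_le h1, integral_inv_of_pos h0 one_pos]
    simp
  · refine Eventually.of_forall (fun y => ?_)
    exact Set.indicator_nonneg (fun t _ => by positivity) _

/-! ### Green's identity against radial functions -/

section Green

variable {E : Type*} [NormedAddCommGroup E] [InnerProductSpace ℝ E]

lemma hasFDerivAt_radial {F : ℝ → ℝ} {F' : ℝ} {y : E} (h : HasDerivAt F F' (‖y‖ ^ 2)) :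
    HasFDerivAt (fun y : E => F (‖y‖ ^ 2)) (F' • (2 • innerSL ℝ y)) y :=
  h.comp_hasFDerivAt y (hasStrictFDerivAt_norm_sq y).hasFDerivAt

variable [FiniteDimensional ℝ E] [MeasurableSpace E] [BorelSpace E]

lemma integrable_of_zero_outside (μ : Measure E) [μ.IsAddHaarMeasure] {g : E → ℝ}
    (hg : Continuous g) (h0 : ∀ y, 1 ≤ ‖y‖ → g y = 0) : Integrable g μ := by
  refine hg.integrable_of_hasCompactSupport ?_
  refine HasCompactSupport.intro (isCompact_closedBall (0 : E) 1) (fun y hy => h0 y ?_)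
  simp only [Metric.mem_closedBall, dist_zero_right, not_le] at hy
  exact hy.le

/-- Green's second identity in the direction `e`, for a compactly supported radial
function `F (|y|²)` with `F' = F1`, `F'' = F2`. -/
lemma green_dir (μ : Measure E) [μ.IsAddHaarMeasure]
    {u : E → ℝ} (hu : ContDiff ℝ (⊤ : ℕ∞) u) (x e : E) {F F1 F2 : ℝ → ℝ}
    (h1 : ∀ t, 0 ≤ t → HasDerivAt F (F1 t) t) (h2 : ∀ t, 0 ≤ t → HasDerivAt F1 (F2 t) t)
    (hc2 : Continuous fun y : E => F2 (‖y‖ ^ 2))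
    (hz : ∀ t, 1 ≤ t → F t = 0 ∧ F1 t = 0 ∧ F2 t = 0) :
    Integrable (fun y : E => F (‖y‖ ^ 2) * iteratedFDeriv ℝ 2 u (x + y) ![e, e]) μ ∧
    Integrable (fun y : E => (4 * (inner ℝ y e) ^ 2 * F2 (‖y‖ ^ 2)
      + 2 * ‖e‖ ^ 2 * F1 (‖y‖ ^ 2)) * u (x + y)) μ ∧
    ∫ y : E, F (‖y‖ ^ 2) * iteratedFDeriv ℝ 2 u (x + y) ![e, e] ∂μ
      = ∫ y : E, (4 * (inner ℝ y e) ^ 2 * F2 (‖y‖ ^ 2)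
          + 2 * ‖e‖ ^ 2 * F1 (‖y‖ ^ 2)) * u (x + y) ∂μ := by
  have hz' : ∀ y : E, 1 ≤ ‖y‖ → F (‖y‖ ^ 2) = 0 ∧ F1 (‖y‖ ^ 2) = 0 ∧ F2 (‖y‖ ^ 2) = 0 :=
    fun y hy => hz _ (one_le_pow₀ hy)
  have d1 : ∀ y : E, HasFDerivAt (fun y : E => F (‖y‖ ^ 2))
      (F1 (‖y‖ ^ 2) • (2 • innerSL ℝ y)) y := fun y => hasFDerivAt_radial (h1 _ (by positivity))
  have d1' : ∀ y : E, HasFDerivAt (fun y : E => F1 (‖y‖ ^ 2))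
      (F2 (‖y‖ ^ 2) • (2 • innerSL ℝ y)) y := fun y => hasFDerivAt_radial (h2 _ (by positivity))
  have c0 : Continuous fun y : E => F (‖y‖ ^ 2) :=
    continuous_iff_continuousAt.2 fun y => (d1 y).continuousAt
  have c1 : Continuous fun y : E => F1 (‖y‖ ^ 2) :=
    continuous_iff_continuousAt.2 fun y => (d1' y).continuousAt
  have ci : Continuous fun y : E => inner ℝ y e := by fun_prop
  have l1 : ∀ y : E, HasLineDerivAt ℝ (fun y : E => F (‖y‖ ^ 2))
      (2 * inner ℝ y e * F1 (‖y‖ ^ 2)) y e := by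
    intro y
    have := (d1 y).hasLineDerivAt e
    convert this using 1
    simp; ring
  have l2 : ∀ y : E, HasLineDerivAt ℝ (fun y : E => 2 * inner ℝ y e * F1 (‖y‖ ^ 2))
      (4 * (inner ℝ y e) ^ 2 * F2 (‖y‖ ^ 2) + 2 * ‖e‖ ^ 2 * F1 (‖y‖ ^ 2)) y e := by
    intro y
    have hp : HasFDerivAt (fun y : E => 2 * inner ℝ y e) ((2 : ℝ) • innerSL ℝ e) y := by
      have hs : (fun y : E => 2 * inner ℝ y e) = fun y : E => 2 * innerSL ℝ e y := by
        ext y; rw [innerSL_apply_apply, real_inner_comm]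
      rw [hs]
      exact (innerSL ℝ e).hasFDerivAt.const_mul 2
    have := (hp.mul (d1' y)).hasLineDerivAt e
    convert this using 1
    · rfl
    · simp; ring
  have hud : ∀ z, HasFDerivAt u (fderiv ℝ u z) z := fun z =>
    (hu.differentiable (by simp) z).hasFDerivAt
  have hu1 : ContDiff ℝ (⊤ : ℕ∞) (fderiv ℝ u) := hu.fderiv_right (by simp)
  have hud2 : ∀ z, HasFDerivAt (fderiv ℝ u) (fderiv ℝ (fderiv ℝ u) z) z := fun z =>
    (hu1.differentiable (by simp) z).hasFDerivAt
  have hu2 : ContDiff ℝ (⊤ : ℕ∞) (fderiv ℝ (fderiv ℝ u)) := hu1.fderiv_right (by simp)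
  have hsh : ∀ y : E, HasFDerivAt (fun y : E => x + y) (ContinuousLinearMap.id ℝ E) y :=
    fun y => (hasFDerivAt_id y).const_add x
  have m1 : ∀ y : E, HasLineDerivAt ℝ (fun y : E => u (x + y)) (fderiv ℝ u (x + y) e) y e :=
    fun y => ((hud (x + y)).comp y (hsh y)).hasLineDerivAt e
  have m2 : ∀ y : E, HasLineDerivAt ℝ (fun y : E => fderiv ℝ u (x + y) e)
      (iteratedFDeriv ℝ 2 u (x + y) ![e, e]) y e := by
    intro y
    have h3 := (((hud2 (x + y)).comp y (hsh y)).clm_apply (hasFDerivAt_const e y)).hasLineDerivAt e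
    rw [iteratedFDeriv_two_apply]
    simpa using h3
  have cs : Continuous fun y : E => x + y := by fun_prop
  have cu : Continuous fun y : E => u (x + y) := hu.continuous.comp cs
  have cu1 : Continuous fun y : E => fderiv ℝ u (x + y) e :=
    (hu1.continuous.comp cs).clm_apply continuous_const
  have cu2 : Continuous fun y : E => iteratedFDeriv ℝ 2 u (x + y) ![e, e] := by
    simp only [iteratedFDeriv_two_apply]
    exact ((hu2.continuous.comp cs).clm_apply continuous_const).clm_apply continuous_const
  have c2 : Continuous fun y : E => 2 * inner ℝ y e * F1 (‖y‖ ^ 2) :=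
    (ci.const_mul 2).mul c1
  have c3 : Continuous fun y : E => 4 * (inner ℝ y e) ^ 2 * F2 (‖y‖ ^ 2)
      + 2 * ‖e‖ ^ 2 * F1 (‖y‖ ^ 2) :=
    (((ci.pow 2).const_mul 4).mul hc2).add (c1.const_mul _)
  have I1 : Integrable (fun y : E => F (‖y‖ ^ 2) * iteratedFDeriv ℝ 2 u (x + y) ![e, e]) μ :=
    integrable_of_zero_outside μ (c0.mul cu2) (fun y hy => by simp [hz' y hy])
  have I2 : Integrable (fun y : E => (4 * (inner ℝ y e) ^ 2 * F2 (‖y‖ ^ 2)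
      + 2 * ‖e‖ ^ 2 * F1 (‖y‖ ^ 2)) * u (x + y)) μ :=
    integrable_of_zero_outside μ (c3.mul cu) (fun y hy => by simp [hz' y hy])
  have I3 : Integrable (fun y : E => (2 * inner ℝ y e * F1 (‖y‖ ^ 2)) * fderiv ℝ u (x + y) e) μ :=
    integrable_of_zero_outside μ (c2.mul cu1) (fun y hy => by simp [hz' y hy])
  have I4 : Integrable (fun y : E => F (‖y‖ ^ 2) * fderiv ℝ u (x + y) e) μ :=
    integrable_of_zero_outside μ (c0.mul cu1) (fun y hy => by simp [hz' y hy])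
  have I5 : Integrable (fun y : E => (2 * inner ℝ y e * F1 (‖y‖ ^ 2)) * u (x + y)) μ :=
    integrable_of_zero_outside μ (c2.mul cu) (fun y hy => by simp [hz' y hy])
  refine ⟨I1, I2, ?_⟩
  have A := integral_bilinear_hasLineDerivAt_right_eq_neg_left_of_integrable
    (μ := μ) (B := ContinuousLinearMap.mul ℝ ℝ) (v := e)
    I3 I1 I4 (fun y _ => l1 y) (fun y _ => m2 y)
  have B := integral_bilinear_hasLineDerivAt_right_eq_neg_left_of_integrable
    (μ := μ) (B := ContinuousLinearMap.mul ℝ ℝ) (v := e)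
    I2 I3 I5 (fun y _ => l2 y) (fun y _ => m1 y)
  simp only [ContinuousLinearMap.mul_apply'] at A B
  rw [A, B, neg_neg]

end Green

/-- Green's second identity on `ℝ⁴` against a compactly supported radial function `F (|y|²)`, whose
Laplacian is `4 |y|² F'' + 8 F'`. -/
lemma green {u : R4 → ℝ} (hu : ContDiff ℝ (⊤ : ℕ∞) u) (x : R4) {F F1 F2 : ℝ → ℝ}
    (h1 : ∀ t, 0 ≤ t → HasDerivAt F (F1 t) t) (h2 : ∀ t, 0 ≤ t → HasDerivAt F1 (F2 t) t)
    (hc2 : Continuous fun y : R4 => F2 (‖y‖ ^ 2))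
    (hz : ∀ t, 1 ≤ t → F t = 0 ∧ F1 t = 0 ∧ F2 t = 0) :
    ∫ y : R4, F (‖y‖ ^ 2) * lapl u (x + y)
      = ∫ y : R4, (4 * ‖y‖ ^ 2 * F2 (‖y‖ ^ 2) + 8 * F1 (‖y‖ ^ 2)) * u (x + y) := by
  have G := fun i : Fin 4 =>
    green_dir (volume : Measure R4) hu x (EuclideanSpace.single i 1) h1 h2 hc2 hz
  have e1 : ∀ y : R4, F (‖y‖ ^ 2) * lapl u (x + y) = ∑ i : Fin 4, F (‖y‖ ^ 2) *
      iteratedFDeriv ℝ 2 u (x + y) ![EuclideanSpace.single i 1, EuclideanSpace.single i 1] := by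
    intro y; rw [lapl, Finset.mul_sum]
  have e2 : ∀ y : R4, (4 * ‖y‖ ^ 2 * F2 (‖y‖ ^ 2) + 8 * F1 (‖y‖ ^ 2)) * u (x + y)
      = ∑ i : Fin 4, (4 * (inner ℝ y (EuclideanSpace.single i (1 : ℝ) : R4)) ^ 2 * F2 (‖y‖ ^ 2)
        + 2 * ‖(EuclideanSpace.single i (1 : ℝ) : R4)‖ ^ 2 * F1 (‖y‖ ^ 2)) * u (x + y) := by
    intro y
    simp only [EuclideanSpace.inner_single_right, EuclideanSpace.real_norm_sq_eq y]
    simp [Fin.sum_univ_four]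
    ring
  simp_rw [e1, e2]
  rw [integral_finsetSum _ (fun i _ => (G i).1), integral_finsetSum _ (fun i _ => (G i).2.1)]
  exact Finset.sum_congr rfl (fun i _ => (G i).2.2)

/-! ### Local representation by the Newtonian potential -/

/-- A smooth cutoff in the variable `t = |y|²`, equal to `1` for `t ≤ 1/4` and `0` for `t ≥ 1`,
with its first two derivatives `χ1`, `χ2`. -/
lemma exists_cutoff : ∃ χ χ1 χ2 : ℝ → ℝ, ∃ K : ℝ, 0 ≤ K ∧ (∀ t, HasDerivAt χ (χ1 t) t) ∧
    (∀ t, HasDerivAt χ1 (χ2 t) t) ∧ Continuous χ2 ∧ (∀ t, 0 ≤ χ t ∧ χ t ≤ 1) ∧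
    (∀ t, t ≤ 1 / 4 → χ t = 1 ∧ χ1 t = 0 ∧ χ2 t = 0) ∧
    (∀ t, 1 ≤ t → χ t = 0 ∧ χ1 t = 0 ∧ χ2 t = 0) ∧ ∀ t, |χ1 t| ≤ K ∧ |χ2 t| ≤ K := by
  set χ : ℝ → ℝ := fun t => Real.smoothTransition (3 - 4 * t) with hχ
  have hs : ContDiff ℝ (⊤ : ℕ∞) χ := Real.smoothTransition.contDiff.comp (by fun_prop)
  have hs1 : ContDiff ℝ (⊤ : ℕ∞) (deriv χ) := (contDiff_infty_iff_deriv.1 hs).2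
  have hs2 : ContDiff ℝ (⊤ : ℕ∞) (deriv (deriv χ)) := (contDiff_infty_iff_deriv.1 hs1).2
  have key : ∀ (s : Set ℝ) (c : ℝ), IsOpen s → (∀ t ∈ s, χ t = c) →
      ∀ t ∈ s, deriv χ t = 0 ∧ deriv (deriv χ) t = 0 := by
    intro s c hso hc t ht
    have h1 : ∀ t ∈ s, deriv χ t = 0 := by
      intro t ht
      have : χ =ᶠ[𝓝 t] fun _ => c := by
        filter_upwards [hso.mem_nhds ht] with r hr using hc r hr
      rw [this.deriv_eq]; simp
    have h2 : deriv χ =ᶠ[𝓝 t] fun _ => 0 := by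
      filter_upwards [hso.mem_nhds ht] with r hr using h1 r hr
    exact ⟨h1 t ht, by rw [h2.deriv_eq]; simp⟩
  have hlow : ∀ t ∈ Set.Iio (1 / 2 : ℝ), χ t = 1 := fun t ht =>
    Real.smoothTransition.one_of_one_le (by simp at ht; linarith)
  have hhigh : ∀ t ∈ Set.Ioi (3 / 4 : ℝ), χ t = 0 := fun t ht =>
    Real.smoothTransition.zero_of_nonpos (by simp at ht; linarith)
  have kl := key _ 1 isOpen_Iio hlow
  have kh := key _ 0 isOpen_Ioi hhigh
  obtain ⟨K1, hK1⟩ := (isCompact_Icc (a := (0 : ℝ)) (b := 1)).exists_bound_of_continuousOn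
    hs1.continuous.continuousOn
  obtain ⟨K2, hK2⟩ := (isCompact_Icc (a := (0 : ℝ)) (b := 1)).exists_bound_of_continuousOn
    hs2.continuous.continuousOn
  refine ⟨χ, deriv χ, deriv (deriv χ), max (max K1 K2) 0, le_max_right _ _,
    fun t => (hs.differentiable (by simp) t).hasDerivAt,
    fun t => (hs1.differentiable (by simp) t).hasDerivAt, hs2.continuous,
    fun t => ⟨Real.smoothTransition.nonneg _, Real.smoothTransition.le_one _⟩,
    fun t ht => ⟨hlow t (by simp; linarith), kl t (by simp; linarith)⟩,
    fun t ht => ⟨hhigh t (by simp; linarith), kh t (by simp; linarith)⟩, fun t => ?_⟩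
  rcases lt_or_ge t 0 with h | h
  · obtain ⟨a, b⟩ := kl t (by simp; linarith)
    simp [a, b]
  rcases lt_or_ge 1 t with h' | h'
  · obtain ⟨a, b⟩ := kh t (by simp; linarith)
    simp [a, b]
  · exact ⟨(hK1 t ⟨h, h'⟩).trans ((le_max_left _ _).trans (le_max_left _ _)),
      (hK2 t ⟨h, h'⟩).trans ((le_max_right _ _).trans (le_max_left _ _))⟩

/-- The functions `8ε / (|y|² + ε)³` with `ε = c⁻²` have total mass `4π²` and concentrate at the
origin as `c → ∞`. -/
lemma tendsto_approx_identity {v : R4 → ℝ} (hv : Integrable v) (hc : Continuous v) :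
    Tendsto (fun c : ℝ => ∫ y : R4, 8 * (c ^ 2)⁻¹ / (‖y‖ ^ 2 + (c ^ 2)⁻¹) ^ 3 * v y) atTop
      (𝓝 (4 * π ^ 2 * v 0)) := by
  set φ : R4 → ℝ := fun y => 2 / π ^ 2 * ((1 + ‖y‖ ^ 2) ^ 3)⁻¹ with hφ
  have hmass : ∫ y, φ y = 1 := by
    rw [hφ, integral_const_mul, integral_kernel]; field_simp
  have hdec : Tendsto (fun y : R4 => ‖y‖ ^ Module.finrank ℝ R4 * φ y)
      (Bornology.cobounded R4) (𝓝 0) := by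
    rw [finrank_R4]
    have h1 : Tendsto (fun y : R4 => 2 / π ^ 2 * (‖y‖ ^ 2)⁻¹) (Bornology.cobounded R4) (𝓝 0) := by
      have := ((tendsto_inv_atTop_zero.comp (tendsto_pow_atTop (α := ℝ) two_ne_zero)).comp
        (tendsto_norm_cobounded_atTop (E := R4))).const_mul (2 / π ^ 2)
      simpa using this
    refine squeeze_zero (fun y => by positivity) (fun y => ?_) h1
    rw [hφ]
    rcases eq_or_ne y 0 with rfl | hy
    · simp
    have hy' : 0 < ‖y‖ := norm_pos_iff.2 hy
    have : ‖y‖ ^ 4 * ((1 + ‖y‖ ^ 2) ^ 3)⁻¹ ≤ (‖y‖ ^ 2)⁻¹ := by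
      rw [← div_eq_mul_inv, div_le_iff₀ (by positivity), inv_mul_eq_div, le_div_iff₀ (by positivity)]
      calc ‖y‖ ^ 4 * ‖y‖ ^ 2 = (‖y‖ ^ 2) ^ 3 := by ring
        _ ≤ (1 + ‖y‖ ^ 2) ^ 3 := by gcongr; linarith
    calc ‖y‖ ^ 4 * (2 / π ^ 2 * ((1 + ‖y‖ ^ 2) ^ 3)⁻¹)
        = 2 / π ^ 2 * (‖y‖ ^ 4 * ((1 + ‖y‖ ^ 2) ^ 3)⁻¹) := by ring
      _ ≤ _ := by gcongr
  have T := (tendsto_integral_comp_smul_smul_of_integrable (μ := (volume : Measure R4))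
    (fun y => by positivity) hmass hdec hv hc.continuousAt).const_mul (4 * π ^ 2)
  refine T.congr' ?_
  filter_upwards [eventually_gt_atTop 0] with c hc0
  rw [← integral_const_mul]
  congr 1
  ext y
  rw [finrank_R4, hφ]
  simp only [norm_smul, Real.norm_eq_abs, abs_of_pos hc0, smul_eq_mul]
  field_simp
  ring

/-- Local representation: up to a local `L¹` term of `u`, `4π² |u|` is controlled by the potential
of `|Δu|` with the truncated kernel `|y|⁻²`. The proof applies `green` to the smooth function
`χ(|y|²) / (|y|² + ε)`, whose Laplacian is `-8ε χ / (|y|² + ε)³` plus the terms `R` with derivatives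
of `χ`, which are bounded uniformly in `ε`; then `ε → 0`. -/
lemma representation : ∃ K : ℝ, 0 ≤ K ∧ ∀ u : R4 → ℝ, ContDiff ℝ (⊤ : ℕ∞) u → ∀ x : R4,
    ENNReal.ofReal (4 * π ^ 2) * ‖u x‖ₑ ≤
      (∫⁻ y in Metric.ball (0 : R4) 1, ENNReal.ofReal ((‖y‖ ^ 2)⁻¹) * ‖lapl u (x + y)‖ₑ)
      + ENNReal.ofReal K * ∫⁻ y in Metric.ball (0 : R4) 1, ‖u (x + y)‖ₑ := by
  obtain ⟨χ, χ1, χ2, K, hK, d1, d2, cχ2, hχ, hlow, hhigh, hb⟩ := exists_cutoff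
  refine ⟨36 * K, by positivity, fun u hu x => ?_⟩
  have cχ : Continuous χ := continuous_iff_continuousAt.2 fun t => (d1 t).continuousAt
  have cχ1 : Continuous χ1 := continuous_iff_continuousAt.2 fun t => (d2 t).continuousAt
  set B := (∫⁻ y in Metric.ball (0 : R4) 1, ENNReal.ofReal ((‖y‖ ^ 2)⁻¹) * ‖lapl u (x + y)‖ₑ)
      + ENNReal.ofReal (36 * K) * ∫⁻ y in Metric.ball (0 : R4) 1, ‖u (x + y)‖ₑ with hB
  have cn : Continuous fun y : R4 => ‖y‖ ^ 2 := by fun_prop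
  have cu : Continuous fun y : R4 => u (x + y) := hu.continuous.comp (by fun_prop)
  set v : R4 → ℝ := fun y => χ (‖y‖ ^ 2) * u (x + y) with hv
  have cv : Continuous v := (cχ.comp cn).mul cu
  have one_le : ∀ y : R4, 1 ≤ ‖y‖ → 1 ≤ ‖y‖ ^ 2 := fun y hy => one_le_pow₀ hy
  have iv : Integrable v := integrable_of_zero_outside volume cv
    (fun y hy => by simp [hv, hhigh _ (one_le y hy)])
  have T := tendsto_approx_identity iv cv
  have hv0 : v 0 = u x := by simp [hv, hlow 0 (by norm_num)]
  rw [hv0] at T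
  have T' := (continuous_enorm.tendsto _).comp T
  have goal : ‖4 * π ^ 2 * u x‖ₑ ≤ B := by
    refine le_of_tendsto T' ?_
    filter_upwards [eventually_gt_atTop 0] with c hc
    simp only [Function.comp]
    set ε : ℝ := (c ^ 2)⁻¹ with hε
    have hε0 : 0 < ε := by positivity
    set R : ℝ → ℝ := fun t => 4 * t * χ2 t / (t + ε) + 8 * ε * χ1 t / (t + ε) ^ 2 with hR
    set F : ℝ → ℝ := fun t => χ t / (t + ε) with hF
    set F1 : ℝ → ℝ := fun t => χ1 t / (t + ε) - χ t / (t + ε) ^ 2 with hF1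
    set F2 : ℝ → ℝ := fun t => χ2 t / (t + ε) - 2 * χ1 t / (t + ε) ^ 2
      + 2 * χ t / (t + ε) ^ 3 with hF2
    have hd : ∀ t : ℝ, HasDerivAt (fun t => t + ε) 1 t := fun t => (hasDerivAt_id t).add_const ε
    have D1 : ∀ t, 0 ≤ t → HasDerivAt F (F1 t) t := by
      intro t ht
      have hne : t + ε ≠ 0 := by positivity
      refine ((d1 t).div (hd t) hne).congr_deriv ?_
      simp only [hF1]; field_simp
    have D2 : ∀ t, 0 ≤ t → HasDerivAt F1 (F2 t) t := by
      intro t ht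
      have hne : t + ε ≠ 0 := by positivity
      refine (((d2 t).div (hd t) hne).sub ((d1 t).div ((hd t).pow 2) (pow_ne_zero 2 hne))).congr_deriv ?_
      simp only [hF2, Pi.pow_apply]; field_simp; ring
    have ne : ∀ y : R4, ‖y‖ ^ 2 + ε ≠ 0 := fun y => by positivity
    have c2 : Continuous fun y : R4 => F2 (‖y‖ ^ 2) := by
      simp only [hF2]
      refine (((cχ2.comp cn).div (by fun_prop) ne).sub (((cχ1.comp cn).const_mul 2).div
        (by fun_prop) (fun y => pow_ne_zero 2 (ne y)))).add (((cχ.comp cn).const_mul 2).div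
        (by fun_prop) (fun y => pow_ne_zero 3 (ne y)))
    have cR : Continuous fun y : R4 => R (‖y‖ ^ 2) := by
      simp only [hR]
      refine (Continuous.div ((cn.const_mul 4).mul (cχ2.comp cn)) (by fun_prop) ne).add
        (((cχ1.comp cn).const_mul (8 * ε)).div (by fun_prop) (fun y => pow_ne_zero 2 (ne y)))
    have cP : Continuous fun y : R4 => 8 * ε / (‖y‖ ^ 2 + ε) ^ 3 :=
      Continuous.div (by fun_prop) (by fun_prop) (fun y => pow_ne_zero 3 (ne y))
    have Z : ∀ t, 1 ≤ t → F t = 0 ∧ F1 t = 0 ∧ F2 t = 0 := by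
      intro t ht
      simp [hF, hF1, hF2, hhigh t ht]
    have G := green hu x D1 D2 c2 Z
    have hsplit : ∀ y : R4, (4 * ‖y‖ ^ 2 * F2 (‖y‖ ^ 2) + 8 * F1 (‖y‖ ^ 2)) * u (x + y)
        = R (‖y‖ ^ 2) * u (x + y) - 8 * ε / (‖y‖ ^ 2 + ε) ^ 3 * v y := by
      intro y
      have := ne y
      simp only [hF1, hF2, hR, hv]
      field_simp
      ring
    simp_rw [hsplit] at G
    have i1 : Integrable fun y : R4 => R (‖y‖ ^ 2) * u (x + y) :=
      integrable_of_zero_outside volume (cR.mul cu)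
        (fun y hy => by simp [hR, hhigh _ (one_le y hy)])
    have i2 : Integrable fun y : R4 => 8 * ε / (‖y‖ ^ 2 + ε) ^ 3 * v y :=
      integrable_of_zero_outside volume (cP.mul cv)
        (fun y hy => by simp [hv, hhigh _ (one_le y hy)])
    rw [integral_sub i1 i2] at G
    have E : ∫ y : R4, 8 * ε / (‖y‖ ^ 2 + ε) ^ 3 * v y
        = (∫ y : R4, R (‖y‖ ^ 2) * u (x + y)) - ∫ y : R4, F (‖y‖ ^ 2) * lapl u (x + y) := by
      linarith
    rw [E]
    refine enorm_sub_le.trans ?_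
    rw [add_comm, hB]
    have out : ∀ y : R4, y ∉ Metric.ball (0 : R4) 1 → 1 ≤ ‖y‖ ^ 2 := fun y hy =>
      one_le y (by simpa using hy)
    have Fb : ∀ y : R4, y ≠ 0 → ‖F (‖y‖ ^ 2)‖ₑ ≤ ENNReal.ofReal ((‖y‖ ^ 2)⁻¹) := by
      intro y hy
      have hy' : 0 < ‖y‖ := norm_pos_iff.2 hy
      rw [Real.enorm_eq_ofReal (div_nonneg (hχ _).1 (by positivity)), ← one_div]
      exact ENNReal.ofReal_le_ofReal
        (div_le_div₀ zero_le_one (hχ _).2 (by positivity) (by linarith))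
    have Rb : ∀ y : R4, ‖R (‖y‖ ^ 2)‖ₑ ≤ ENNReal.ofReal (36 * K) := by
      intro y
      rw [← ofReal_norm]
      apply ENNReal.ofReal_le_ofReal
      obtain ⟨b1, b2⟩ := hb (‖y‖ ^ 2)
      generalize ht : ‖y‖ ^ 2 = t at *
      have ht0 : 0 ≤ t := ht ▸ by positivity
      rcases le_or_gt t (1 / 4) with h | h
      · simp only [hR, (hlow t h).2.1, (hlow t h).2.2]
        simp; positivity
      have hp : 0 < t + ε := by positivity
      have e1 : |4 * t * χ2 t / (t + ε)| ≤ 4 * K := by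
        rw [abs_div, abs_of_pos hp, div_le_iff₀ hp, abs_mul, abs_of_nonneg (by positivity)]
        nlinarith [mul_nonneg hK hε0.le, mul_le_mul_of_nonneg_left b2 ht0]
      -- here `ε ≤ t + ε` and `1/4 ≤ t + ε` on the support of `χ1`
      have e2 : |8 * ε * χ1 t / (t + ε) ^ 2| ≤ 32 * K := by
        rw [abs_div, abs_of_pos (pow_pos hp 2), div_le_iff₀ (pow_pos hp 2), abs_mul,
          abs_of_nonneg (by positivity)]
        have q1 : 8 * ε * |χ1 t| ≤ 8 * ε * K := by gcongr
        have q2 : ε ≤ 4 * (t + ε) ^ 2 := by nlinarith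
        nlinarith [mul_le_mul_of_nonneg_right q2 hK]
      rw [Real.norm_eq_abs]
      calc |R t| ≤ _ := abs_add_le _ _
        _ ≤ 36 * K := by linarith
    refine add_le_add ((enorm_integral_le_lintegral_enorm _).trans ?_)
      ((enorm_integral_le_lintegral_enorm _).trans ?_)
    · rw [← lintegral_indicator measurableSet_ball]
      have hne : ∀ᵐ y : R4, y ≠ 0 := compl_mem_ae_iff.2 (measure_singleton 0)
      refine lintegral_mono_ae ?_
      filter_upwards [hne] with y hy
      by_cases hyb : y ∈ Metric.ball (0 : R4) 1
      · rw [Set.indicator_of_mem hyb, enorm_mul]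
        gcongr
        exact Fb y hy
      · rw [(Z _ (out y hyb)).1]; simp
    · rw [← lintegral_const_mul' _ _ ENNReal.ofReal_ne_top, ← lintegral_indicator measurableSet_ball]
      refine lintegral_mono fun y => ?_
      by_cases hyb : y ∈ Metric.ball (0 : R4) 1
      · rw [Set.indicator_of_mem hyb, enorm_mul]
        gcongr
        exact Rb y
      · simp [hR, hhigh _ (out y hyb)]
  rwa [enorm_mul, Real.enorm_eq_ofReal (by positivity)] at goal

/-! ### Splitting of the potential -/

lemma sq_lintegral_le {α : Type*} [MeasurableSpace α] (ν : Measure α) {f : α → ℝ≥0∞}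
    (hf : AEMeasurable f ν) : (∫⁻ a, f a ∂ν) ^ 2 ≤ ν Set.univ * ∫⁻ a, f a ^ 2 ∂ν := by
  have H := ENNReal.lintegral_mul_le_Lp_mul_Lq ν Real.HolderConjugate.two_two
    (aemeasurable_const (b := (1 : ℝ≥0∞))) hf
  simp only [Pi.mul_apply, one_mul, ENNReal.rpow_two, one_pow,
    lintegral_one] at H
  have e : ∀ a : ℝ≥0∞, (a ^ (1 / 2 : ℝ)) ^ 2 = a := fun a => by
    rw [← ENNReal.rpow_natCast, ← ENNReal.rpow_mul]; norm_num
  calc (∫⁻ a, f a ∂ν) ^ 2 ≤ _ := pow_le_pow_left' H 2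
    _ = _ := by rw [mul_pow, e, e]

/-- The potential of `f` with the truncated kernel `|y|^{-(2+s)}`, integrable for `s < 2`. -/
def pot (s : ℝ) (f : R4 → ℝ≥0∞) (x : R4) : ℝ≥0∞ :=
  ∫⁻ y in Metric.ball (0 : R4) 1, ENNReal.ofReal (‖y‖ ^ (-(2 + s))) * f (x + y)

lemma measurable_pot (s : ℝ) {f : R4 → ℝ≥0∞} (hf : Measurable f) : Measurable (pot s f) := by
  refine Measurable.lintegral_prod_right' (f := fun p : R4 × R4 =>
    ENNReal.ofReal (‖p.2‖ ^ (-(2 + s))) * f (p.1 + p.2)) ?_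
  fun_prop

/-- Young's inequality `L¹ * L² ⊆ L²` for `pot`. -/
lemma lintegral_pot_sq_le (s : ℝ) {f : R4 → ℝ≥0∞} (hf : Measurable f) :
    ∫⁻ x, pot s f x ^ 2 ≤
      (∫⁻ y in Metric.ball (0 : R4) 1, ENNReal.ofReal (‖y‖ ^ (-(2 + s)))) ^ 2 * ∫⁻ x, f x ^ 2 := by
  have hk : Measurable fun y : R4 => ENNReal.ofReal (‖y‖ ^ (-(2 + s))) := by fun_prop
  set c := ∫⁻ y in Metric.ball (0 : R4) 1, ENNReal.ofReal (‖y‖ ^ (-(2 + s))) with hc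
  set ν := ((volume : Measure R4).restrict (Metric.ball 0 1)).withDensity
    (fun y => ENNReal.ofReal (‖y‖ ^ (-(2 + s)))) with hν
  have hpot : ∀ x, pot s f x = ∫⁻ y, f (x + y) ∂ν := by
    intro x
    rw [hν, lintegral_withDensity_eq_lintegral_mul _ hk (by fun_prop)]
    rfl
  have huniv : ν Set.univ = c := by
    rw [hν, withDensity_apply _ MeasurableSet.univ, Measure.restrict_univ]
  calc ∫⁻ x, pot s f x ^ 2 ≤ ∫⁻ x, c * ∫⁻ y, f (x + y) ^ 2 ∂ν := by
        refine lintegral_mono fun x => ?_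
        simp only [hpot]
        rw [← huniv]
        exact sq_lintegral_le ν (by fun_prop)
    _ = c * ∫⁻ x, ∫⁻ y, f (x + y) ^ 2 ∂ν := by
        rw [lintegral_const_mul]
        exact Measurable.lintegral_prod_right' (f := fun p : R4 × R4 => f (p.1 + p.2) ^ 2)
          (by fun_prop)
    _ = c * ∫⁻ y, (∫⁻ x, f (x + y) ^ 2) ∂ν := by
        rw [lintegral_lintegral_swap]
        exact Measurable.aemeasurable
          (show Measurable fun p : R4 × R4 => f (p.1 + p.2) ^ 2 by fun_prop)
    _ = c * ∫⁻ _, (∫⁻ x, f x ^ 2) ∂ν := by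
        rw [lintegral_congr fun y => lintegral_add_right_eq_self (fun x => f x ^ 2) y]
    _ = c ^ 2 * ∫⁻ x, f x ^ 2 := by
        rw [lintegral_const, huniv]
        ring

/-- Splitting of the Newtonian potential at radius `δ`: the near part is absorbed by `pot s f`
and the far part is estimated by the Cauchy-Schwarz inequality, with the sharp constant. -/
lemma newton_split {s δ θ : ℝ} (hs : 0 < s) (hθ : 0 ≤ θ) (h0 : 0 < δ) (h1 : δ ≤ 1)
    {f : R4 → ℝ≥0∞} (hf : Measurable f) (hfθ : ∫⁻ x, f x ^ 2 ≤ ENNReal.ofReal θ) (x : R4) :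
    ∫⁻ y in Metric.ball (0 : R4) 1, ENNReal.ofReal ((‖y‖ ^ 2)⁻¹) * f (x + y) ≤
      ENNReal.ofReal (δ ^ s) * pot s f x
        + ENNReal.ofReal (√(2 * π ^ 2 * -Real.log δ * θ)) := by
  set g : R4 → ℝ≥0∞ := fun y =>
    ENNReal.ofReal ((Set.Ico δ 1).indicator (fun t => (t ^ 2)⁻¹) ‖y‖) with hg
  have hgm : Measurable g := by
    refine ENNReal.measurable_ofReal.comp (Measurable.comp (g := (Set.Ico δ 1).indicator
      fun t : ℝ => (t ^ 2)⁻¹) (Measurable.indicator (by fun_prop) measurableSet_Ico) measurable_norm)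
  have hpt : ∀ y ∈ Metric.ball (0 : R4) 1, ENNReal.ofReal ((‖y‖ ^ 2)⁻¹) * f (x + y) ≤
      ENNReal.ofReal (δ ^ s) * (ENNReal.ofReal (‖y‖ ^ (-(2 + s))) * f (x + y))
        + g y * f (x + y) := by
    intro y hy
    have hy1 : ‖y‖ < 1 := by simpa using hy
    rw [← mul_assoc, ← add_mul]
    gcongr
    rcases lt_or_ge ‖y‖ δ with h | h
    · rw [← ENNReal.ofReal_mul (by positivity)]
      refine le_add_right (ENNReal.ofReal_le_ofReal ?_)
      rcases (norm_nonneg y).eq_or_lt with h' | h'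
      · rw [← h']; norm_num; positivity
      have e : (‖y‖ ^ 2)⁻¹ = ‖y‖ ^ s * ‖y‖ ^ (-(2 + s)) := by
        rw [← Real.rpow_add h', show s + -(2 + s) = -(2 : ℝ) by ring, Real.rpow_neg h'.le]
        norm_cast
      rw [e]
      gcongr
    · refine le_add_left ?_
      rw [hg]
      simp only
      rw [Set.indicator_of_mem (show ‖y‖ ∈ Set.Ico δ 1 from ⟨h, hy1⟩)]
  have hfx : Measurable fun y => f (x + y) := by fun_prop
  have hm : Measurable fun y : R4 => ENNReal.ofReal (‖y‖ ^ (-(2 + s))) * f (x + y) := by fun_prop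
  have far : ∫⁻ y in Metric.ball (0 : R4) 1, g y * f (x + y) ≤
      ENNReal.ofReal (√(2 * π ^ 2 * -Real.log δ * θ)) := by
    have hlog : 0 ≤ -Real.log δ := by linarith [Real.log_nonpos h0.le h1]
    have H := ENNReal.lintegral_mul_le_Lp_mul_Lq (volume : Measure R4)
      Real.HolderConjugate.two_two hgm.aemeasurable hfx.aemeasurable
    have hg2 : ∫⁻ y, g y ^ (2 : ℝ) = ENNReal.ofReal (2 * π ^ 2 * -Real.log δ) := by
      rw [← lintegral_annulus h0 h1]
      congr 1
      ext y
      rw [hg, ENNReal.rpow_two]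
      by_cases hy : ‖y‖ ∈ Set.Ico δ 1
      · simp only [Set.indicator_of_mem hy]
        rw [← ENNReal.ofReal_pow (by positivity)]
        congr 1
        rw [inv_pow, ← pow_mul]
      · simp [Set.indicator_of_notMem hy]
    have hf2 : ∫⁻ y, f (x + y) ^ (2 : ℝ) ≤ ENNReal.ofReal θ := by
      rw [lintegral_add_left_eq_self (fun y => f y ^ (2 : ℝ)) x]
      simpa only [ENNReal.rpow_two] using hfθ
    calc ∫⁻ y in Metric.ball (0 : R4) 1, g y * f (x + y) ≤ ∫⁻ y, g y * f (x + y) :=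
          setLIntegral_le_lintegral _ _
      _ ≤ _ := H
      _ ≤ ENNReal.ofReal (2 * π ^ 2 * -Real.log δ) ^ (1 / 2 : ℝ) * ENNReal.ofReal θ ^ (1 / 2 : ℝ) := by
          rw [hg2]; gcongr
      _ = _ := by
          rw [← ENNReal.mul_rpow_of_nonneg _ _ (by norm_num), ← ENNReal.ofReal_mul (by positivity),
            ENNReal.ofReal_rpow_of_nonneg (by positivity) (by norm_num),
            Real.sqrt_eq_rpow]
  calc _ ≤ ∫⁻ y in Metric.ball (0 : R4) 1,
        (ENNReal.ofReal (δ ^ s) * (ENNReal.ofReal (‖y‖ ^ (-(2 + s))) * f (x + y))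
          + g y * f (x + y)) := setLIntegral_mono' measurableSet_ball hpt
    _ = ENNReal.ofReal (δ ^ s) * pot s f x
        + ∫⁻ y in Metric.ball (0 : R4) 1, g y * f (x + y) := by
        rw [lintegral_add_left (by fun_prop), lintegral_const_mul _ hm]
        rfl
    _ ≤ _ := by gcongr

/-! ### The subcritical exponential bound -/

/-- Subcritical exponential bound. If `4π² |v|` is at most a constant plus the truncated Newtonian
potential of an `L²` function `f` with `γ ‖f‖² < 32π²`, then `exp (γ v²)` is at most a constant
multiple of `1 + W²` with `W` bounded in `L²`. -/
lemma exp_bound {γ θ A : ℝ} (hγ : 0 < γ) (hθ : 0 ≤ θ) (hsub : γ * θ < 32 * π ^ 2) (hA : 0 ≤ A) :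
    ∃ K : ℝ≥0∞, K ≠ ⊤ ∧ ∀ (v : R4 → ℝ) (f : R4 → ℝ≥0∞), Measurable f →
      ∫⁻ x, f x ^ 2 ≤ ENNReal.ofReal θ →
      (∀ x, ENNReal.ofReal (4 * π ^ 2) * ‖v x‖ₑ ≤
        (∫⁻ y in Metric.ball (0 : R4) 1, ENNReal.ofReal ((‖y‖ ^ 2)⁻¹) * f (x + y))
          + ENNReal.ofReal A) →
      ∃ W : R4 → ℝ≥0∞, Measurable W ∧ ∫⁻ x, W x ^ 2 ≤ K ∧
        ∀ x, ENNReal.ofReal (Real.exp (γ * v x ^ 2)) ≤ K * (1 + W x ^ 2) := by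
  set m : ℝ := γ * θ / (32 * π ^ 2) with hm
  have hpi : 0 < 32 * π ^ 2 := by positivity
  have hm0 : 0 ≤ m := by positivity
  have hm1 : m < 1 := (div_lt_one hpi).2 hsub
  have hγθ : γ * θ = m * (32 * π ^ 2) := by rw [hm]; field_simp
  set s : ℝ := 1 + m with hs
  set η : ℝ := (1 - m) / 2 with hη
  have hs0 : 0 < s := by positivity
  have hη0 : 0 < η := by rw [hη]; linarith
  set C0 : ℝ := γ * ((1 + 1 / η) * (A + 1) ^ 2) / (16 * π ^ 4) with hC0
  set c := ∫⁻ y in Metric.ball (0 : R4) 1, ENNReal.ofReal (‖y‖ ^ (-(2 + s))) with hc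
  have hct : c ≠ ⊤ := (lintegral_rpow_neg_lt_top (by linarith)).ne
  set K : ℝ≥0∞ := c ^ 2 * ENNReal.ofReal θ + ENNReal.ofReal (Real.exp C0) with hK
  have hK0 : K ≠ 0 := by
    have : ENNReal.ofReal (Real.exp C0) ≠ 0 := by simp [Real.exp_pos]
    simp only [hK, ne_eq, add_eq_zero, not_and]
    exact fun _ => this
  refine ⟨K, by finiteness, fun v f hf hfθ hv => ⟨pot s f, measurable_pot s hf, ?_, fun x => ?_⟩⟩
  · refine (lintegral_pot_sq_le s hf).trans (le_add_right ?_)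
    gcongr
  by_cases hW : pot s f x = ⊤
  · simp [hW, hK0]
  set w : ℝ := (pot s f x).toReal with hw
  have hw0 : 0 ≤ w := ENNReal.toReal_nonneg
  have hWw : pot s f x = ENNReal.ofReal w := (ENNReal.ofReal_toReal hW).symm
  set M : ℝ := max 1 w with hM
  have hM1 : 1 ≤ M := le_max_left _ _
  have hMp : 0 < M := by positivity
  set L : ℝ := Real.log M with hL
  have hL0 : 0 ≤ L := Real.log_nonneg hM1
  -- the optimal splitting radius: `δ ^ s * w ≤ 1`
  set δ : ℝ := M ^ (-(1 / s)) with hδ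
  have hδ0 : 0 < δ := by positivity
  have hδ1 : δ ≤ 1 := Real.rpow_le_one_of_one_le_of_nonpos hM1 (by
    have : 0 < 1 / s := by positivity
    linarith)
  have hδs : δ ^ s = M⁻¹ := by
    rw [hδ, ← Real.rpow_mul hMp.le, show -(1 / s) * s = -1 by field_simp, Real.rpow_neg_one]
  have hlogδ : -Real.log δ = L / s := by
    rw [hδ, Real.log_rpow hMp]; ring
  set r : ℝ := √(2 * π ^ 2 * -Real.log δ * θ) with hr
  have hr0 : 0 ≤ r := Real.sqrt_nonneg _
  have hr2 : r ^ 2 = 2 * π ^ 2 * (L / s) * θ := by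
    rw [hr, hlogδ, Real.sq_sqrt (by positivity)]
  have hmain : 4 * π ^ 2 * |v x| ≤ (A + 1) + r := by
    have h1 := (hv x).trans (add_le_add_left (newton_split hs0 hθ hδ0 hδ1 hf hfθ x) _)
    rw [hWw, ← ofReal_norm, Real.norm_eq_abs, ← ENNReal.ofReal_mul (by positivity),
      ← ENNReal.ofReal_mul (by positivity), ← ENNReal.ofReal_add (by positivity) hr0,
      ← ENNReal.ofReal_add (by positivity) hA, ENNReal.ofReal_le_ofReal_iff (by positivity)] at h1
    have h2 : δ ^ s * w ≤ 1 := by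
      rw [hδs, inv_mul_le_iff₀ hMp, mul_one]; exact le_max_right _ _
    linarith
  have hsq : 16 * π ^ 4 * v x ^ 2 ≤ (1 + 1 / η) * (A + 1) ^ 2 + (1 + η) * r ^ 2 := by
    have h1 : (4 * π ^ 2 * |v x|) ^ 2 ≤ ((A + 1) + r) ^ 2 := by gcongr
    have h2 : (4 * π ^ 2 * |v x|) ^ 2 = 16 * π ^ 4 * v x ^ 2 := by rw [mul_pow, sq_abs]; ring
    have h3 : 2 * (A + 1) * r ≤ 1 / η * (A + 1) ^ 2 + η * r ^ 2 := by
      have : 0 ≤ 1 / η * ((A + 1) - η * r) ^ 2 := by positivity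
      have e : 1 / η * ((A + 1) - η * r) ^ 2
          = 1 / η * (A + 1) ^ 2 + η * r ^ 2 - 2 * (A + 1) * r := by field_simp; ring
      linarith
    nlinarith
  have hexp : γ * v x ^ 2 ≤ C0 + 2 * L := by
    have h1 : γ * ((1 + η) * r ^ 2) ≤ 16 * π ^ 4 * (2 * L) := by
      rw [hr2]
      have e : γ * ((1 + η) * (2 * π ^ 2 * (L / s) * θ))
          = 64 * π ^ 4 * L * (m * (1 + η) / s) := by
        calc _ = (γ * θ) * ((1 + η) * (2 * π ^ 2 * (L / s))) := by ring
          _ = _ := by rw [hγθ]; ring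
      have h2 : m * (1 + η) / s ≤ 1 / 2 := by
        rw [div_le_iff₀ hs0, hη, hs]; nlinarith [sq_nonneg (1 - m)]
      rw [e]
      calc 64 * π ^ 4 * L * (m * (1 + η) / s) ≤ 64 * π ^ 4 * L * (1 / 2) := by gcongr
        _ = _ := by ring
    have hp4 : 0 < 16 * π ^ 4 := by positivity
    have h3 : γ * (16 * π ^ 4 * v x ^ 2) ≤
        γ * ((1 + 1 / η) * (A + 1) ^ 2 + (1 + η) * r ^ 2) := by gcongr
    have h4 : C0 * (16 * π ^ 4) = γ * ((1 + 1 / η) * (A + 1) ^ 2) := by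
      rw [hC0]; field_simp
    refine le_of_mul_le_mul_left ?_ hp4
    nlinarith
  have hfin : Real.exp (γ * v x ^ 2) ≤ Real.exp C0 * (1 + w ^ 2) := by
    calc Real.exp (γ * v x ^ 2) ≤ Real.exp (C0 + 2 * L) := Real.exp_le_exp.2 hexp
      _ = Real.exp C0 * M ^ 2 := by
        rw [Real.exp_add, two_mul, Real.exp_add, hL, Real.exp_log hMp]; ring
      _ ≤ Real.exp C0 * (1 + w ^ 2) := by
        have hM2 : M ^ 2 ≤ 1 + w ^ 2 := by
          rcases le_total 1 w with h | h
          · rw [hM, max_eq_right h]; linarith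
          · rw [hM, max_eq_left h]; linarith [sq_nonneg w]
        exact mul_le_mul_of_nonneg_left hM2 (Real.exp_pos _).le
  rw [hWw, ← ENNReal.ofReal_pow hw0, ← ENNReal.ofReal_one, ← ENNReal.ofReal_add zero_le_one
    (by positivity)]
  calc _ ≤ ENNReal.ofReal (Real.exp C0 * (1 + w ^ 2)) := ENNReal.ofReal_le_ofReal hfin
    _ = ENNReal.ofReal (Real.exp C0) * ENNReal.ofReal (1 + w ^ 2) :=
      ENNReal.ofReal_mul (Real.exp_pos _).le
    _ ≤ _ := by gcongr; exact le_add_self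

/-! ### The weighted exponential integral -/

lemma continuous_lapl {u : R4 → ℝ} (hu : ContDiff ℝ (⊤ : ℕ∞) u) : Continuous (lapl u) := by
  have h : Continuous (iteratedFDeriv ℝ 2 u) :=
    (contDiff_infty.1 hu 2).continuous_iteratedFDeriv le_rfl
  unfold lapl
  refine continuous_finsetSum _ fun i _ => ?_
  exact (continuous_eval_const _).comp h

/-- Pointwise bound for the weighted integrand: Young's inequality separates the exponential from
the weight on the unit ball; outside it the weight is at most one. -/
lemma integrand_le {β α q p t s : ℝ} (hβ : 0 ≤ β) (hα : 0 < α) (hq : 1 < q) (hp : 1 < p)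
    (hs : 0 ≤ s) :
    ((Real.exp (α * t ^ 2) - 1) / s ^ β) ^ q ≤
      Real.exp (α * q * p * t ^ 2) + s ^ (-(β * q * (p / (p - 1)))) ∧
    (1 ≤ s → |t| ≤ 1 → ((Real.exp (α * t ^ 2) - 1) / s ^ β) ^ q ≤ (α * Real.exp α) ^ q * t ^ 2) ∧
    (1 ≤ s → ((Real.exp (α * t ^ 2) - 1) / s ^ β) ^ q ≤ Real.exp (α * q * p * t ^ 2)) := by
  set E : ℝ := Real.exp (α * t ^ 2) - 1 with hE
  have hαt : 0 ≤ α * t ^ 2 := by positivity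
  have hE0 : 0 ≤ E := by rw [hE]; linarith [Real.one_le_exp hαt]
  have hEexp : E ≤ Real.exp (α * t ^ 2) := by rw [hE]; linarith
  have hq0 : 0 < q := by linarith
  have hp0 : 0 < p := by linarith
  have hEq : (E ^ q) ^ p ≤ Real.exp (α * q * p * t ^ 2) := by
    calc (E ^ q) ^ p ≤ (Real.exp (α * t ^ 2) ^ q) ^ p := by gcongr
      _ = _ := by
        rw [← Real.exp_mul, ← Real.exp_mul]; congr 1; ring
  have hdiv : 1 ≤ s → (E / s ^ β) ^ q ≤ E ^ q := fun h => by
    gcongr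
    exact div_le_self hE0 (Real.one_le_rpow h hβ)
  refine ⟨?_, fun h1 ht => ?_, fun h1 => ?_⟩
  · have hpq : p.HolderConjugate (p / (p - 1)) := Real.HolderConjugate.conjExponent hp
    have e : (E / s ^ β) ^ q = E ^ q * (s ^ (-β)) ^ q := by
      rw [div_eq_mul_inv, ← Real.rpow_neg hs, Real.mul_rpow hE0 (by positivity)]
    have e2 : ((s ^ (-β)) ^ q) ^ (p / (p - 1)) = s ^ (-(β * q * (p / (p - 1)))) := by
      rw [← Real.rpow_mul hs, ← Real.rpow_mul hs]; congr 1; ring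
    have Y := Real.young_inequality_of_nonneg (show 0 ≤ E ^ q by positivity)
      (show 0 ≤ (s ^ (-β)) ^ q by positivity) hpq
    rw [e]
    refine Y.trans (add_le_add ?_ ?_)
    · exact (div_le_self (by positivity) hp.le).trans hEq
    · rw [e2]
      exact div_le_self (by positivity) hpq.symm.lt.le
  · have ht2 : t ^ 2 ≤ 1 := by rw [← sq_abs]; exact pow_le_one₀ (abs_nonneg t) ht
    have hEt : E ≤ α * Real.exp α * t ^ 2 := by
      have h2 : 1 - α * t ^ 2 ≤ Real.exp (-(α * t ^ 2)) := by
        linarith [Real.add_one_le_exp (-(α * t ^ 2))]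
      have h3 : Real.exp (α * t ^ 2) * (1 - α * t ^ 2) ≤ 1 := by
        calc _ ≤ Real.exp (α * t ^ 2) * Real.exp (-(α * t ^ 2)) := by gcongr
          _ = 1 := by rw [← Real.exp_add]; simp
      have h4 : Real.exp (α * t ^ 2) ≤ Real.exp α := Real.exp_le_exp.2 (by nlinarith)
      calc E ≤ Real.exp (α * t ^ 2) * (α * t ^ 2) := by rw [hE]; linarith
        _ ≤ Real.exp α * (α * t ^ 2) := by gcongr
        _ = _ := by ring
    calc _ ≤ E ^ q := hdiv h1
      _ ≤ (α * Real.exp α * t ^ 2) ^ q := by gcongr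
      _ = (α * Real.exp α) ^ q * (t ^ 2) ^ q := Real.mul_rpow (by positivity) (by positivity)
      _ ≤ (α * Real.exp α) ^ q * t ^ 2 := by
        gcongr
        exact Real.rpow_le_self_of_le_one (by positivity) ht2 hq.le
  · calc _ ≤ E ^ q := hdiv h1
      _ ≤ Real.exp (α * t ^ 2) ^ q := by gcongr
      _ = Real.exp (α * q * 1 * t ^ 2) := by rw [← Real.exp_mul]; congr 1; ring
      _ ≤ _ := by gcongr

/-- An `L²` bound on `v` and a bound on `exp (γ v²)` by `1 + W²` with `W ∈ L²` control the weighted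
exponential integral in `L^q`. -/
lemma weighted_bound {β α q p : ℝ} (hβ : 0 ≤ β) (hα : 0 < α) (hq : 1 < q) (hp : 1 < p)
    (hr : β * q * (p / (p - 1)) < 4) {K D : ℝ≥0∞} (hK : K ≠ ⊤) (hD : D ≠ ⊤) :
    ∃ C : ℝ≥0∞, C ≠ ⊤ ∧ ∀ (v : R4 → ℝ) (W : R4 → ℝ≥0∞), Measurable v → Measurable W →
      ∫⁻ x, W x ^ 2 ≤ K → ∫⁻ x, ‖v x‖ₑ ^ 2 ≤ D →
      (∀ x, ENNReal.ofReal (Real.exp (α * q * p * v x ^ 2)) ≤ K * (1 + W x ^ 2)) →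
      ∫⁻ x : R4, ENNReal.ofReal (((Real.exp (α * v x ^ 2) - 1) / ‖x‖ ^ β) ^ q) ≤ C := by
  set r := β * q * (p / (p - 1)) with hrdef
  set B := Metric.ball (0 : R4) 1 with hB
  set I := ∫⁻ y in B, ENNReal.ofReal (‖y‖ ^ (-r)) with hI
  have hIt : I ≠ ⊤ := (lintegral_rpow_neg_lt_top hr).ne
  have hBt : volume B ≠ ⊤ := measure_ball_lt_top.ne
  set K2 := ENNReal.ofReal ((α * Real.exp α) ^ q) with hK2
  refine ⟨(K * volume B + I) + (K2 * D + K * (D + K)), by finiteness,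
    fun v W hv hW hWK hvD hexp => ?_⟩
  have hsq : ∀ x, ENNReal.ofReal (v x ^ 2) = ‖v x‖ₑ ^ 2 := fun x => by
    rw [← ofReal_norm, Real.norm_eq_abs, ← ENNReal.ofReal_pow (abs_nonneg _), sq_abs]
  have hpt : ∀ x : R4, ENNReal.ofReal (((Real.exp (α * v x ^ 2) - 1) / ‖x‖ ^ β) ^ q) ≤
      B.indicator (fun x => K + ENNReal.ofReal (‖x‖ ^ (-r))) x +
        (K2 * ‖v x‖ₑ ^ 2 + K * (‖v x‖ₑ ^ 2 + W x ^ 2)) := by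
    intro x
    obtain ⟨h1, h2, h3⟩ := integrand_le (t := v x) hβ hα hq hp (norm_nonneg x)
    by_cases hx : x ∈ B
    · rw [Set.indicator_of_mem hx]
      calc _ ≤ ENNReal.ofReal (Real.exp (α * q * p * v x ^ 2) + ‖x‖ ^ (-r)) :=
            ENNReal.ofReal_le_ofReal h1
        _ = ENNReal.ofReal (Real.exp (α * q * p * v x ^ 2)) + ENNReal.ofReal (‖x‖ ^ (-r)) :=
            ENNReal.ofReal_add (by positivity) (by positivity)
        _ ≤ K * (1 + W x ^ 2) + ENNReal.ofReal (‖x‖ ^ (-r)) := by gcongr; exact hexp x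
        _ = K + ENNReal.ofReal (‖x‖ ^ (-r)) + K * (0 + W x ^ 2) := by ring
        _ ≤ _ := by
          gcongr
          refine le_add_left ?_
          gcongr
          exact zero_le
    · rw [Set.indicator_of_notMem hx, zero_add]
      have hx1 : 1 ≤ ‖x‖ := by simpa [hB] using hx
      rcases le_or_gt |v x| 1 with hv1 | hv1
      · refine le_add_right ((ENNReal.ofReal_le_ofReal (h2 hx1 hv1)).trans ?_)
        rw [ENNReal.ofReal_mul (by positivity), hsq]
      · refine le_add_left ((ENNReal.ofReal_le_ofReal (h3 hx1)).trans ((hexp x).trans ?_))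
        gcongr
        rw [← hsq, ← ENNReal.ofReal_one]
        refine ENNReal.ofReal_le_ofReal ?_
        rw [← sq_abs]
        exact one_le_pow₀ hv1.le
  calc _ ≤ ∫⁻ x : R4, (B.indicator (fun x => K + ENNReal.ofReal (‖x‖ ^ (-r))) x +
        (K2 * ‖v x‖ₑ ^ 2 + K * (‖v x‖ₑ ^ 2 + W x ^ 2))) := lintegral_mono hpt
    _ = (K * volume B + I) + (K2 * (∫⁻ x, ‖v x‖ₑ ^ 2)
          + K * ((∫⁻ x, ‖v x‖ₑ ^ 2) + ∫⁻ x, W x ^ 2)) := by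
        rw [lintegral_add_right _ (by fun_prop), lintegral_indicator measurableSet_ball,
          lintegral_add_left (by fun_prop), lintegral_add_left (by fun_prop),
          lintegral_const_mul _ (by fun_prop), lintegral_const_mul _ (by fun_prop),
          lintegral_add_left (by fun_prop), setLIntegral_const]
    _ ≤ _ := by gcongr

/-- The subcritical exponential bound for smooth functions. Only the part of `Δu` above a fixed
height `M` has to be small in `L²`. -/
lemma exp_bound_smooth {γ θ D M : ℝ} (hγ : 0 < γ) (hθ : 0 ≤ θ) (hsub : γ * θ < 32 * π ^ 2) :
    ∃ K : ℝ≥0∞, K ≠ ⊤ ∧ ∀ u : R4 → ℝ, ContDiff ℝ (⊤ : ℕ∞) u →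
      ∫⁻ x, ({x | ENNReal.ofReal M < ‖lapl u x‖ₑ}.indicator (fun x => ‖lapl u x‖ₑ) x) ^ 2
        ≤ ENNReal.ofReal θ →
      ∫⁻ x, ‖u x‖ₑ ^ 2 ≤ ENNReal.ofReal D →
      ∃ W : R4 → ℝ≥0∞, Measurable W ∧ ∫⁻ x, W x ^ 2 ≤ K ∧
        ∀ x, ENNReal.ofReal (Real.exp (γ * u x ^ 2)) ≤ K * (1 + W x ^ 2) := by
  obtain ⟨K1, hK1, hrep⟩ := representation
  set B := Metric.ball (0 : R4) 1 with hB
  have hBt : volume B ≠ ⊤ := measure_ball_lt_top.ne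
  set I := ∫⁻ y in B, ENNReal.ofReal (‖y‖ ^ (-(2 : ℝ))) with hI
  have hIt : I ≠ ⊤ := (lintegral_rpow_neg_lt_top (by norm_num)).ne
  set A : ℝ≥0∞ := I * ENNReal.ofReal M + ENNReal.ofReal K1 * (volume B + ENNReal.ofReal D) with hA
  have hAt : A ≠ ⊤ := by finiteness
  obtain ⟨K, hK, H⟩ := exp_bound (A := A.toReal) hγ hθ hsub ENNReal.toReal_nonneg
  refine ⟨K, hK, fun u hu hlap hL2 => ?_⟩
  have hm : Measurable fun x => ‖lapl u x‖ₑ := (continuous_lapl hu).measurable.enorm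
  have hum : Measurable fun x => ‖u x‖ₑ := hu.continuous.measurable.enorm
  set S := {x | ENNReal.ofReal M < ‖lapl u x‖ₑ} with hS
  have hSm : MeasurableSet S := measurableSet_lt measurable_const hm
  refine H u (S.indicator fun x => ‖lapl u x‖ₑ) (hm.indicator hSm) hlap fun x => ?_
  rw [ENNReal.ofReal_toReal hAt]
  have hk : Measurable fun y : R4 => ENNReal.ofReal ((‖y‖ ^ 2)⁻¹) := by fun_prop
  have hcut : ∀ z, ‖lapl u z‖ₑ ≤ S.indicator (fun x => ‖lapl u x‖ₑ) z + ENNReal.ofReal M := by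
    intro z
    by_cases hz : z ∈ S
    · rw [Set.indicator_of_mem hz]; exact le_self_add
    · rw [Set.indicator_of_notMem hz, zero_add]; exact not_lt.1 hz
  have h1 : ∫⁻ y in B, ENNReal.ofReal ((‖y‖ ^ 2)⁻¹) * ‖lapl u (x + y)‖ₑ ≤
      (∫⁻ y in B, ENNReal.ofReal ((‖y‖ ^ 2)⁻¹) * S.indicator (fun x => ‖lapl u x‖ₑ) (x + y))
        + I * ENNReal.ofReal M := by
    have hI' : I = ∫⁻ y in B, ENNReal.ofReal ((‖y‖ ^ 2)⁻¹) := by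
      refine lintegral_congr fun y => ?_
      rw [Real.rpow_neg (norm_nonneg y)]
      norm_cast
    rw [hI', ← lintegral_mul_const _ hk, ← lintegral_add_right _ (by fun_prop)]
    refine lintegral_mono fun y => ?_
    rw [← mul_add]
    gcongr
    exact hcut _
  have h2 : ∫⁻ y in B, ‖u (x + y)‖ₑ ≤ volume B + ENNReal.ofReal D := by
    calc ∫⁻ y in B, ‖u (x + y)‖ₑ ≤ ∫⁻ y in B, (1 + ‖u (x + y)‖ₑ ^ 2) := by
          refine lintegral_mono fun y => ?_
          rcases le_total ‖u (x + y)‖ₑ 1 with h | h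
          · exact h.trans le_self_add
          · exact (le_self_pow₀ h two_ne_zero).trans le_add_self
      _ = volume B + ∫⁻ y in B, ‖u (x + y)‖ₑ ^ 2 := by
          rw [lintegral_add_left measurable_const, setLIntegral_const, one_mul]
      _ ≤ volume B + ∫⁻ y, ‖u (x + y)‖ₑ ^ 2 := by
          exact add_le_add_right (setLIntegral_le_lintegral _ _) _
      _ ≤ _ := by
          rw [lintegral_add_left_eq_self (fun y => ‖u y‖ₑ ^ 2) x]
          gcongr
  calc _ ≤ _ := hrep u hu x
    _ ≤ _ := add_le_add h1 (mul_le_mul_right h2 _)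
    _ = _ := by rw [hA, add_assoc]

/-- The part of an `L²` function above height `M` is small in `L²` for `M` large. -/
lemma exists_truncation {f : R4 → ℝ≥0∞} (hf : Measurable f) (hft : ∀ x, f x ≠ ⊤)
    (hf2 : ∫⁻ x, f x ^ 2 ≠ ⊤) {θ : ℝ≥0∞} (hθ : 0 < θ) :
    ∃ M : ℝ, 0 ≤ M ∧ ∫⁻ x, ({x | ENNReal.ofReal M < f x}.indicator f x) ^ 2 ≤ θ := by
  have hlim : Tendsto (fun n : ℕ => ∫⁻ x, ({x | ENNReal.ofReal n < f x}.indicator f x) ^ 2) atTop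
      (𝓝 (∫⁻ _ : R4, 0)) := by
    refine tendsto_lintegral_of_dominated_convergence (fun x => f x ^ 2) (fun n => ?_) (fun n => ?_)
      hf2 (ae_of_all _ fun x => ?_)
    · exact (hf.indicator (measurableSet_lt measurable_const hf)).pow_const 2
    · refine ae_of_all _ fun x => ?_
      dsimp only
      gcongr
      exact Set.indicator_le_self _ _ _
    · refine tendsto_const_nhds.congr' ?_
      obtain ⟨k, hk⟩ := exists_nat_gt (f x).toReal
      filter_upwards [eventually_ge_atTop k] with n hn
      rw [Set.indicator_of_notMem]
      · simp
      · rw [Set.mem_ofPred_eq, not_lt, ← ENNReal.ofReal_toReal (hft x)]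
        refine ENNReal.ofReal_le_ofReal (hk.le.trans ?_)
        exact_mod_cast hn
  rw [lintegral_zero] at hlim
  obtain ⟨n, hn⟩ := (hlim.eventually (gt_mem_nhds hθ)).exists
  exact ⟨n, Nat.cast_nonneg n, hn.le⟩

/-- Exponents for the final step: `p` separates the exponential from the weight, and `q > 1`
fits below the critical threshold. -/
lemma exists_exponents {α β θ : ℝ} (hα : 0 < α) (hβ : 0 ≤ β) (hβ4 : β < 4) (hθ : 0 < θ)
    (h : θ < (32 * π ^ 2 / α) * (1 - β / 4)) :
    ∃ p q : ℝ, 1 < p ∧ 1 < q ∧ β * q * (p / (p - 1)) < 4 ∧ α * q * p * θ < 32 * π ^ 2 := by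
  have hb : 0 < 1 - β / 4 := by linarith
  have h1 : max 1 (1 / (1 - β / 4)) < 32 * π ^ 2 / (α * θ) := by
    have e : α * θ < 32 * π ^ 2 * (1 - β / 4) := by
      calc α * θ < α * ((32 * π ^ 2 / α) * (1 - β / 4)) := by gcongr
        _ = _ := by field_simp
    have h0 : 0 < α * θ := by positivity
    refine max_lt ?_ ?_
    · rw [lt_div_iff₀ h0]
      nlinarith [sq_nonneg π]
    · rw [div_lt_div_iff₀ hb h0]
      linarith
  obtain ⟨p, hp1, hp2⟩ := exists_between h1
  have hp : 1 < p := (le_max_left _ _).trans_lt hp1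
  have hpb : 1 / (1 - β / 4) < p := (le_max_right _ _).trans_lt hp1
  have hp0 : 0 < p - 1 := by linarith
  have c1 : β * 1 * (p / (p - 1)) < 4 := by
    rw [div_lt_iff₀ hb] at hpb
    rw [mul_one, ← mul_div_assoc, div_lt_iff₀ hp0]
    linarith
  have c2 : α * 1 * p * θ < 32 * π ^ 2 := by
    rw [lt_div_iff₀ (by positivity)] at hp2
    linarith
  have e1 : ∀ᶠ q in 𝓝[>] (1 : ℝ), β * q * (p / (p - 1)) < 4 := by
    refine nhdsWithin_le_nhds (ContinuousAt.eventually_lt ?_ continuousAt_const c1)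
    fun_prop
  have e2 : ∀ᶠ q in 𝓝[>] (1 : ℝ), α * q * p * θ < 32 * π ^ 2 := by
    refine nhdsWithin_le_nhds (ContinuousAt.eventually_lt ?_ continuousAt_const c2)
    fun_prop
  obtain ⟨q, ⟨h1, h2⟩, h3⟩ := ((e1.and e2).and self_mem_nhdsWithin).exists
  exact ⟨p, q, hp, h3, h1, h2⟩

lemma lintegral_lapl_sq_le {a b u : R4 → ℝ} (ha : ∀ x, 0 ≤ a x) (hb : ∀ x, 0 ≤ b x) :
    ∫⁻ x, ‖lapl u x‖ₑ ^ 2 ≤ enorm2 a b u := by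
  refine lintegral_mono fun x => ?_
  rw [← ofReal_norm, Real.norm_eq_abs, ← ENNReal.ofReal_pow (abs_nonneg _), sq_abs]
  refine ENNReal.ofReal_le_ofReal ?_
  have h1 := mul_nonneg (ha x) (sq_nonneg ‖gradient u x‖)
  have h2 := mul_nonneg (hb x) (sq_nonneg (u x))
  linarith

lemma lintegral_sq_le {a b u : R4 → ℝ} {b₀ : ℝ} (hb₀ : 0 < b₀) (ha : ∀ x, 0 ≤ a x)
    (hb : ∀ x, b₀ ≤ b x) : ∫⁻ x, ‖u x‖ₑ ^ 2 ≤ ENNReal.ofReal b₀⁻¹ * enorm2 a b u := by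
  rw [enorm2, ← lintegral_const_mul' _ _ ENNReal.ofReal_ne_top]
  refine lintegral_mono fun x => ?_
  dsimp only
  rw [← ofReal_norm, Real.norm_eq_abs, ← ENNReal.ofReal_pow (abs_nonneg _), sq_abs,
    ← ENNReal.ofReal_mul (by positivity)]
  refine ENNReal.ofReal_le_ofReal ?_
  rw [le_inv_mul_iff₀ hb₀]
  have h1 := mul_nonneg (ha x) (sq_nonneg ‖gradient u x‖)
  have h2 := mul_le_mul_of_nonneg_right (hb x) (sq_nonneg (u x))
  have h3 := sq_nonneg (lapl u x)
  linarith

/-- Lemma 3.8: if `limsup ‖uₙ‖_E² < (32π²/α₀)(1 − β/4)`, then `(e^{α₀uₙ²} − 1)/|x|^β` is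
bounded in `L^q(ℝ⁴)` for some `q > 1`. -/
theorem stmt_10 (β α₀ : ℝ) (hβ0 : 0 ≤ β) (hβ4 : β < 4) (hα₀ : 0 < α₀)
    (a b : R4 → ℝ) (ha : Continuous a) (hb : Continuous b)
    (a₀ b₀ : ℝ) (ha₀ : 0 < a₀) (hb₀ : 0 < b₀)
    (haa : ∀ x, a₀ ≤ a x) (hbb : ∀ x, b₀ ≤ b x)
    (u : ℕ → R4 → ℝ) (hu : ∀ n, ContDiff ℝ (⊤ : ℕ∞) (u n))
    (hfin : ∀ n, enorm2 a b (u n) < ⊤)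
    (hsup : Filter.limsup (fun n => enorm2 a b (u n)) atTop
      < ENNReal.ofReal ((32 * π ^ 2 / α₀) * (1 - β / 4))) :
    ∃ q : ℝ, 1 < q ∧ ∃ C : ℝ, ∀ n,
      (∫⁻ x : R4,
        ENNReal.ofReal (((Real.exp (α₀ * (u n x) ^ 2) - 1) / ‖x‖ ^ β) ^ q))
        ≤ ENNReal.ofReal C := by
  have ha' : ∀ x, 0 ≤ a x := fun x => ha₀.le.trans (haa x)
  have hb' : ∀ x, 0 ≤ b x := fun x => hb₀.le.trans (hbb x)
  obtain ⟨θe, hθ1, hθ2⟩ := exists_between hsup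
  have hθt : θe ≠ ⊤ := hθ2.ne_top
  set θ : ℝ := θe.toReal with hθ
  have hθe : θe = ENNReal.ofReal θ := (ENNReal.ofReal_toReal hθt).symm
  have hθ0 : 0 < θ := ENNReal.toReal_pos (pos_of_gt hθ1).ne' hθt
  rw [hθe] at hθ1 hθ2
  obtain ⟨p, q, hp, hq, hr, hγθ⟩ := exists_exponents hα₀ hβ0 hβ4 hθ0
    ((ENNReal.ofReal_lt_ofReal_iff_of_nonneg hθ0.le).1 hθ2)
  obtain ⟨N, hN⟩ := eventually_atTop.1 (eventually_lt_of_limsup_lt hθ1)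
  -- the finitely many initial terms only enlarge the bound and the truncation height
  set De : ℝ≥0∞ := ENNReal.ofReal θ + ∑ n ∈ Finset.range N, enorm2 a b (u n) with hDe
  have hDet : De ≠ ⊤ := by
    rw [hDe]
    exact ENNReal.add_ne_top.2 ⟨ENNReal.ofReal_ne_top,
      (ENNReal.sum_lt_top.2 fun n _ => hfin n).ne⟩
  have hD : ∀ n, enorm2 a b (u n) ≤ De := by
    intro n
    rcases le_or_gt N n with h | h
    · exact (hN n h).le.trans le_self_add
    · exact (Finset.single_le_sum (f := fun n => enorm2 a b (u n)) (fun _ _ => zero_le)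
        (Finset.mem_range.2 h)).trans le_add_self
  have hm : ∀ n, Measurable fun x => ‖lapl (u n) x‖ₑ := fun n =>
    (continuous_lapl (hu n)).measurable.enorm
  choose M hM0 hM using fun n => exists_truncation (hm n) (fun x => enorm_ne_top)
    ((lintegral_lapl_sq_le (u := u n) ha' hb').trans_lt (hfin n)).ne
    (ENNReal.ofReal_pos.2 hθ0)
  set M' : ℝ := ∑ n ∈ Finset.range N, M n with hM'
  have htr : ∀ n, ∫⁻ x, ({x | ENNReal.ofReal M' < ‖lapl (u n) x‖ₑ}.indicator
      (fun x => ‖lapl (u n) x‖ₑ) x) ^ 2 ≤ ENNReal.ofReal θ := by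
    intro n
    rcases le_or_gt N n with h | h
    · refine le_trans (lintegral_mono fun x => ?_)
        ((lintegral_lapl_sq_le (u := u n) ha' hb').trans (hN n h).le)
      dsimp only
      gcongr
      exact Set.indicator_le_self _ _ _
    · refine le_trans (lintegral_mono fun x => ?_) (hM n)
      dsimp only
      gcongr
      exact Finset.single_le_sum (f := M) (fun n _ => hM0 n) (Finset.mem_range.2 h)
  set D : ℝ≥0∞ := ENNReal.ofReal b₀⁻¹ * De with hDdef
  have hDt : D ≠ ⊤ := by finiteness
  have hL2 : ∀ n, ∫⁻ x, ‖u n x‖ₑ ^ 2 ≤ D := fun n =>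
    (lintegral_sq_le hb₀ ha' hbb).trans (mul_le_mul_right (hD n) _)
  obtain ⟨K, hK, hexp⟩ := exp_bound_smooth (D := D.toReal) (M := M')
    (γ := α₀ * q * p) (by positivity) hθ0.le hγθ
  obtain ⟨C, hC, hbd⟩ := weighted_bound hβ0 hα₀ hq hp hr hK hDt
  refine ⟨q, hq, C.toReal, fun n => ?_⟩
  rw [ENNReal.ofReal_toReal hC]
  obtain ⟨W, hW, hWK, hWe⟩ := hexp (u n) (hu n) (htr n)
    (by rw [ENNReal.ofReal_toReal hDt]; exact hL2 n)
  exact hbd (u n) W (hu n).continuous.measurable hW hWK (hL2 n) hWe
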